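/- Let 𝓛 be a finite set of ports with |𝓛| = L and 𝓡 a finite set of servers with |𝓡| = N, with nested subsets 𝓡¹ ⊆ 𝓡² ⊆ 𝓡. Let λ : 𝓛 → [0,∞), let 0 < p₁ ≤ p₂ < 1 and 0 < d̃₁ ≤ d̃₂, and set H_j = 2·ln(2)·(N+L)/(N·p_j) for j ∈ {1,2}. Form a random bipartite graph G between 𝓛 and 𝓡 in which, independently over all pairs, port ℓ is joined to server r ∈ 𝓡¹ with probability min(1, λ(ℓ)·H₁/(N·d̃₁)), and to server r ∈ 𝓡² ∖ 𝓡¹ with probability min(1, λ(ℓ)·H₂/(N·d̃₂)). For a subset 𝓘 ⊆ 𝓡, let D_𝓘 = ∑ of λ(ℓ) over all ports ℓ that have no edge to any server in 𝓘. Then with probability at least 1 − 2^{−(N+L−1)}, the graph G satisfies simultaneously: D_𝓘 ≤ N·d̃₁ for every 𝓘 ⊆ 𝓡¹ with |𝓘| ≥ N·p₁, and D_𝓘 ≤ N·d̃₂ for every 𝓘 ⊆ 𝓡² with |𝓘| ≥ N·p₂. -/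

import Mathlib

open scoped Classical

/-!
Fix one class of servers. If some large `I` leaves ports of total rate more than `N d̃`
disconnected, then for the set `J` of these ports none of the pairs in `J ×ˢ I` is an edge. By the
inequality `1 - x ≤ exp (-x)` and the choice of `H`, this event has probability at most
`4⁻¹ ^ (N + L)`. There are at most `2 ^ (N + L)` pairs `(J, I)`, so the class fails with
probability at most `2⁻¹ ^ (N + L)`. For the second class, the edge probabilities at the servers of
`𝓡¹` are large enough because `p₁ ≤ p₂` and `d̃₁ ≤ d̃₂`. A union bound over the two classes
finishes the proof.
-/

open Finset

section UnionBound

variable {α β : Type*} {w : α → ℝ}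

lemma sum_filter_le_sum_sum_filter (hw : ∀ a, 0 ≤ w a) (s : Finset α) (t : Finset β)
    {P : α → Prop} [DecidablePred P] {A : β → α → Prop} [∀ b, DecidablePred (A b)]
    (hPA : ∀ a ∈ s, P a → ∃ b ∈ t, A b a) :
    ∑ a ∈ s with P a, w a ≤ ∑ b ∈ t, ∑ a ∈ s with A b a, w a := by
  simp_rw [sum_filter]
  rw [sum_comm]
  have hterm (a : α) (b : β) : 0 ≤ if A b a then w a else 0 := by split_ifs <;> simp [hw]
  refine sum_le_sum fun a ha => ?_
  split_ifs with hP
  · obtain ⟨b, hb, hA⟩ := hPA a ha hP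
    calc w a = if A b a then w a else 0 := (if_pos hA).symm
      _ ≤ ∑ b ∈ t, if A b a then w a else 0 := single_le_sum (fun b _ => hterm a b) hb
  · exact sum_nonneg fun b _ => hterm a b

lemma sum_sub_add_le_sum_filter_and (hw : ∀ a, 0 ≤ w a) (s : Finset α) (P Q : α → Prop)
    [DecidablePred P] [DecidablePred Q] :
    ∑ a ∈ s, w a - (∑ a ∈ s with ¬ P a, w a + ∑ a ∈ s with ¬ Q a, w a) ≤
      ∑ a ∈ s with P a ∧ Q a, w a := by
  rw [sub_le_iff_le_add]
  simp_rw [sum_filter]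
  rw [← sum_add_distrib, ← sum_add_distrib]
  refine sum_le_sum fun a _ => ?_
  by_cases hP : P a <;> by_cases hQ : Q a <;> simp [hP, hQ, hw a]

end UnionBound

section RandomSubset

variable {E : Type*} [Fintype E] [DecidableEq E] {q : E → ℝ}

/-- The probability that a random subset of `E`, containing each `e` independently with
probability `q e`, equals `G`. Events are finite sets of values of `G`, and their probabilities
are finite sums of these weights. -/
noncomputable def randomSubsetWeight (q : E → ℝ) (G : Finset E) : ℝ :=
  ∏ e, if e ∈ G then q e else 1 - q e

lemma randomSubsetWeight_nonneg (hq : ∀ e, q e ∈ Set.Icc 0 1) (G : Finset E) :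
    0 ≤ randomSubsetWeight q G :=
  prod_nonneg fun e _ => by split_ifs; exacts [(hq e).1, sub_nonneg.2 (hq e).2]

lemma randomSubsetWeight_eq_mul (q : E → ℝ) (G : Finset E) :
    randomSubsetWeight q G = (∏ e ∈ G, q e) * ∏ e ∈ Gᶜ, (1 - q e) := by
  rw [randomSubsetWeight, prod_ite, filter_mem_eq_inter, univ_inter, compl_eq_univ_sdiff,
    filter_notMem_eq_sdiff]

lemma sum_randomSubsetWeight_disjoint (q : E → ℝ) (T : Finset E) :
    ∑ G with Disjoint T G, randomSubsetWeight q G = ∏ e ∈ T, (1 - q e) := by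
  have hweight (G : Finset E) : (if Disjoint T G then randomSubsetWeight q G else 0) =
      (∏ e ∈ G, if e ∈ T then 0 else q e) * ∏ e ∈ Gᶜ, (1 - q e) := by
    split_ifs with hTG
    · rw [randomSubsetWeight_eq_mul]
      congr 1
      exact prod_congr rfl fun e heG => (if_neg (disjoint_right.1 hTG heG)).symm
    · obtain ⟨e, heT, heG⟩ := not_disjoint_iff.1 hTG
      rw [prod_eq_zero heG (if_pos heT : (if e ∈ T then 0 else q e) = 0), zero_mul]
  calc ∑ G with Disjoint T G, randomSubsetWeight q G
      = ∏ e, ((if e ∈ T then 0 else q e) + (1 - q e)) := by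
        rw [sum_filter, Fintype.prod_add]
        exact sum_congr rfl fun G _ => hweight G
    _ = ∏ e, if e ∈ T then 1 - q e else 1 := prod_congr rfl fun e _ => by split_ifs <;> ring
    _ = ∏ e ∈ T, (1 - q e) := Fintype.prod_ite_mem T _

lemma sum_randomSubsetWeight (q : E → ℝ) : ∑ G, randomSubsetWeight q G = 1 := by
  simpa using sum_randomSubsetWeight_disjoint q ∅

end RandomSubset

lemma one_sub_le_exp_neg_of_min_one_le {x y : ℝ} (h : min 1 x ≤ y) : 1 - y ≤ Real.exp (-x) := by
  rcases min_le_iff.1 h with h | h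
  · linarith [Real.exp_pos (-x)]
  · linarith [Real.one_sub_le_exp_neg x]

lemma two_pow_mul_exp_neg_two_mul_log_two (n : ℕ) :
    (2 : ℝ) ^ n * Real.exp (-(2 * Real.log 2 * n)) = (2 ^ n)⁻¹ := by
  have hexp : Real.exp (2 * Real.log 2 * n) = 2 ^ n * 2 ^ n := by
    rw [show 2 * Real.log 2 * n = n * Real.log 2 + n * Real.log 2 by ring, Real.exp_add,
      Real.exp_nat_mul, Real.exp_log two_pos]
  rw [Real.exp_neg, hexp]
  field_simp

section BipartiteGraph

variable {PortT ServT : Type*}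

lemma prod_product_one_sub_le_exp {lam : PortT → ℝ} {c : ℝ} {q : PortT × ServT → ℝ}
    (J : Finset PortT) (I : Finset ServT) (hq1 : ∀ e, q e ≤ 1)
    (hq : ∀ ℓ, ∀ r ∈ I, min 1 (lam ℓ * c) ≤ q (ℓ, r)) :
    ∏ e ∈ J ×ˢ I, (1 - q e) ≤ Real.exp (-(#I * (∑ ℓ ∈ J, lam ℓ) * c)) := by
  calc ∏ e ∈ J ×ˢ I, (1 - q e)
      ≤ ∏ e ∈ J ×ˢ I, Real.exp (-(lam e.1 * c)) :=
        prod_le_prod (fun e _ => sub_nonneg.2 (hq1 e)) fun e he =>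
          one_sub_le_exp_neg_of_min_one_le (hq e.1 e.2 (mem_product.1 he).2)
    _ = Real.exp (-(#I * (∑ ℓ ∈ J, lam ℓ) * c)) := by
        rw [← Real.exp_sum, sum_neg_distrib, sum_product]
        simp only [sum_const, nsmul_eq_mul, mul_sum, sum_mul, mul_assoc]

variable [Fintype PortT]

/-- The quantity `D_𝓘` of the paper: the total arrival rate of the ports that the edge set `G`
joins to no server in `I`. -/
noncomputable def disconnectedRate (lam : PortT → ℝ) (G : Finset (PortT × ServT))
    (I : Finset ServT) : ℝ :=
  ∑ ℓ with ∀ r ∈ I, (ℓ, r) ∉ G, lam ℓ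

/-- The well-connectedness condition (Assumption 3.2) for one class `R` of servers: the ports with
no edge to a set `I ⊆ R` of at least `m` servers have total arrival rate at most `t`. In the paper
`m = N p` and `t = N d̃`. -/
def WellConnected (lam : PortT → ℝ) (R : Finset ServT) (m t : ℝ)
    (G : Finset (PortT × ServT)) : Prop :=
  ∀ I ⊆ R, m ≤ #I → disconnectedRate lam G I ≤ t

variable {lam : PortT → ℝ} {R : Finset ServT} {m t c : ℝ} {q : PortT × ServT → ℝ}

lemma exists_disjoint_product_of_not_wellConnected {G : Finset (PortT × ServT)}
    (hG : ¬ WellConnected lam R m t G) :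
    ∃ (J : Finset PortT) (I : Finset ServT),
      I ⊆ R ∧ m ≤ #I ∧ t < ∑ ℓ ∈ J, lam ℓ ∧ Disjoint (J ×ˢ I) G := by
  unfold WellConnected at hG
  push Not at hG
  obtain ⟨I, hIR, hmI, htD⟩ := hG
  refine ⟨_, I, hIR, hmI, htD, disjoint_left.2 fun e he => ?_⟩
  obtain ⟨hport, hserv⟩ := mem_product.1 he
  exact (mem_filter.1 hport).2 e.2 hserv

variable [Fintype ServT]

lemma sum_randomSubsetWeight_not_wellConnected_le (hq01 : ∀ e, q e ∈ Set.Icc 0 1)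
    (hq : ∀ ℓ, ∀ r ∈ R, min 1 (lam ℓ * c) ≤ q (ℓ, r)) (hc : 0 ≤ c) (ht : 0 ≤ t) :
    ∑ G with ¬ WellConnected lam R m t G, randomSubsetWeight q G ≤
      2 ^ (Fintype.card PortT + Fintype.card ServT) * Real.exp (-(m * t * c)) := by
  let Q : Finset (Finset PortT × Finset ServT) := {P | P.2 ⊆ R ∧ m ≤ #P.2 ∧ t < ∑ ℓ ∈ P.1, lam ℓ}
  have hcover (G : Finset (PortT × ServT)) (hG : ¬ WellConnected lam R m t G) :
      ∃ P ∈ Q, Disjoint (P.1 ×ˢ P.2) G := by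
    obtain ⟨J, I, hIR, hmI, htJ, hdisj⟩ := exists_disjoint_product_of_not_wellConnected hG
    exact ⟨(J, I), mem_filter.2 ⟨mem_univ _, hIR, hmI, htJ⟩, hdisj⟩
  have hprob : ∀ P ∈ Q, ∏ e ∈ P.1 ×ˢ P.2, (1 - q e) ≤ Real.exp (-(m * t * c)) := by
    intro P hP
    obtain ⟨hIR, hmI, htJ⟩ := (mem_filter.1 hP).2
    refine (prod_product_one_sub_le_exp P.1 P.2 (fun e => (hq01 e).2)
      fun ℓ r hr => hq ℓ r (hIR hr)).trans ?_
    gcongr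
  have hcard : #Q ≤ 2 ^ (Fintype.card PortT + Fintype.card ServT) := by
    simpa [pow_add] using card_le_univ Q
  calc ∑ G with ¬ WellConnected lam R m t G, randomSubsetWeight q G
      ≤ ∑ P ∈ Q, ∑ G with Disjoint (P.1 ×ˢ P.2) G, randomSubsetWeight q G :=
        sum_filter_le_sum_sum_filter (randomSubsetWeight_nonneg hq01) univ Q fun G _ => hcover G
    _ = ∑ P ∈ Q, ∏ e ∈ P.1 ×ˢ P.2, (1 - q e) :=
        sum_congr rfl fun P _ => sum_randomSubsetWeight_disjoint q _
    _ ≤ #Q * Real.exp (-(m * t * c)) := by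
        simpa only [nsmul_eq_mul] using sum_le_card_nsmul Q _ _ hprob
    _ ≤ 2 ^ (Fintype.card PortT + Fintype.card ServT) * Real.exp (-(m * t * c)) := by
        gcongr
        exact_mod_cast hcard

end BipartiteGraph

section EdgeRate

/-- The edge probability `λ(ℓ) H / (N d̃)` of the construction before it is capped at `1`, with
`x` in the role of `λ(ℓ)` and with `H = 2 ln(2) (N + L) / (N p)`. -/
noncomputable def edgeRate (N L : ℕ) (p d x : ℝ) : ℝ :=
  x * (2 * Real.log 2 * ((N : ℝ) + L) / ((N : ℝ) * p)) / ((N : ℝ) * d)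

variable {N L : ℕ}

lemma edgeRate_nonneg {p d x : ℝ} (hp : 0 ≤ p) (hd : 0 ≤ d) (hx : 0 ≤ x) :
    0 ≤ edgeRate N L p d x := by
  unfold edgeRate
  positivity

lemma edgeRate_anti {p₁ p₂ d₁ d₂ x : ℝ} (hN : 0 < N) (hp₁ : 0 < p₁) (hp : p₁ ≤ p₂)
    (hd₁ : 0 < d₁) (hd : d₁ ≤ d₂) (hx : 0 ≤ x) :
    edgeRate N L p₂ d₂ x ≤ edgeRate N L p₁ d₁ x := by
  unfold edgeRate
  gcongr

lemma sum_randomSubsetWeight_not_wellConnected_le_inv_two_pow {PortT ServT : Type*}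
    [Fintype PortT] [Fintype ServT] (hL : Fintype.card PortT = L) (hN : Fintype.card ServT = N)
    (hNpos : 0 < N) {R : Finset ServT} {lam : PortT → ℝ} {p d : ℝ} (hp : 0 < p) (hd : 0 < d)
    {q : PortT × ServT → ℝ} (hq01 : ∀ e, q e ∈ Set.Icc 0 1)
    (hq : ∀ ℓ, ∀ r ∈ R, min 1 (edgeRate N L p d (lam ℓ)) ≤ q (ℓ, r)) :
    ∑ G with ¬ WellConnected lam R (N * p) (N * d) G, randomSubsetWeight q G ≤
      ((2 : ℝ) ^ (L + N))⁻¹ := by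
  let c : ℝ := 2 * Real.log 2 * (N + L) / (N * p) / (N * d)
  have hqc : ∀ ℓ, ∀ r ∈ R, min 1 (lam ℓ * c) ≤ q (ℓ, r) := by
    simpa only [c, edgeRate, mul_div_assoc] using hq
  have hbudget : N * p * (N * d) * c = 2 * Real.log 2 * (L + N : ℕ) := by
    simp only [c, Nat.cast_add]
    field_simp
    ring
  calc ∑ G with ¬ WellConnected lam R (N * p) (N * d) G, randomSubsetWeight q G
      ≤ 2 ^ (L + N) * Real.exp (-(N * p * (N * d) * c)) := by
        rw [← hL, ← hN]
        exact sum_randomSubsetWeight_not_wellConnected_le hq01 hqc (by positivity) (by positivity)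
    _ = ((2 : ℝ) ^ (L + N))⁻¹ := by rw [hbudget, two_pow_mul_exp_neg_two_mul_log_two]

end EdgeRate

section LayeredProb

variable {α : Type*} {R₁ R₂ : Finset α} {a b : ℝ} {r : α}

/-- The edge probability of the construction at a server `r`, seen from one port: `a` and `b`,
capped at `1`, are the values for `r ∈ R₁` and for `r ∈ R₂ \ R₁`. -/
noncomputable def layeredProb (R₁ R₂ : Finset α) (a b : ℝ) (r : α) : ℝ :=
  if r ∈ R₁ then min 1 a else if r ∈ R₂ then min 1 b else 0

lemma layeredProb_mem_Icc (ha : 0 ≤ a) (hb : 0 ≤ b) : layeredProb R₁ R₂ a b r ∈ Set.Icc 0 1 := by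
  unfold layeredProb
  split_ifs <;> simp [ha, hb]

lemma min_one_le_layeredProb_of_mem_left (hr : r ∈ R₁) : min 1 a ≤ layeredProb R₁ R₂ a b r :=
  (if_pos hr).ge

lemma min_one_le_layeredProb_of_mem_right (hba : b ≤ a) (hr : r ∈ R₂) :
    min 1 b ≤ layeredProb R₁ R₂ a b r := by
  unfold layeredProb
  split_ifs
  · gcongr
  · rfl

end LayeredProb

theorem stmt_8_general {PortT ServT : Type*} [Fintype PortT] [Fintype ServT]
    (L N : ℕ) (hL : Fintype.card PortT = L) (hN : Fintype.card ServT = N) (hNpos : 0 < N)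
    (R₁ R₂ : Finset ServT) (lam : PortT → ℝ) (p₁ p₂ d₁ d₂ : ℝ)
    (hp₁ : 0 < p₁) (hp₂ : 0 < p₂) (hd₁ : 0 < d₁) (hd₂ : 0 < d₂)
    (q : PortT × ServT → ℝ) (hq01 : ∀ e, q e ∈ Set.Icc 0 1)
    (hq₁ : ∀ ℓ, ∀ r ∈ R₁, min 1 (edgeRate N L p₁ d₁ (lam ℓ)) ≤ q (ℓ, r))
    (hq₂ : ∀ ℓ, ∀ r ∈ R₂, min 1 (edgeRate N L p₂ d₂ (lam ℓ)) ≤ q (ℓ, r)) :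
    1 - (2 : ℝ) ^ (-((N : ℤ) + (L : ℤ) - 1)) ≤
      ∑ G with WellConnected lam R₁ (N * p₁) (N * d₁) G ∧
        WellConnected lam R₂ (N * p₂) (N * d₂) G, randomSubsetWeight q G := by
  have hfail₁ :=
    sum_randomSubsetWeight_not_wellConnected_le_inv_two_pow hL hN hNpos hp₁ hd₁ hq01 hq₁
  have hfail₂ :=
    sum_randomSubsetWeight_not_wellConnected_le_inv_two_pow hL hN hNpos hp₂ hd₂ hq01 hq₂
  have hpow : (2 : ℝ) ^ (-((N : ℤ) + L - 1)) = (2 ^ (L + N))⁻¹ + (2 ^ (L + N))⁻¹ := by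
    rw [show -((N : ℤ) + L - 1) = 1 - (L + N : ℕ) by push_cast; ring, zpow_sub₀ two_ne_zero,
      zpow_natCast, zpow_one, ← two_mul, div_eq_mul_inv]
  have hunion := sum_sub_add_le_sum_filter_and (randomSubsetWeight_nonneg hq01) univ
    (WellConnected lam R₁ (N * p₁) (N * d₁)) (WellConnected lam R₂ (N * p₂) (N * d₂))
  rw [sum_randomSubsetWeight] at hunion
  linarith

/-- The random graph construction of Theorem 3.5: a random bipartite graph `G` between
ports and servers, with edges present independently with the given probabilities
(`weight G` is the probability of a given edge set `G`), satisfies the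
well-connectedness condition (Assumption 3.2) with probability at least
`1 − 2^{−(N+L−1)}`. Here `D G I` is the total arrival rate of ports with no edge to
the server subset `I`. -/
theorem stmt_8 {PortT ServT : Type*} [Fintype PortT] [Fintype ServT]
    (L N : ℕ) (hL : Fintype.card PortT = L) (hN : Fintype.card ServT = N)
    (hNpos : 0 < N)
    (R1 R2 : Finset ServT) (hR12 : R1 ⊆ R2)
    (lam : PortT → ℝ) (hlam : ∀ ℓ, 0 ≤ lam ℓ)
    (p₁ p₂ d₁ d₂ : ℝ) (hp1 : 0 < p₁) (hp12 : p₁ ≤ p₂) (hp2 : p₂ < 1)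
    (hd1 : 0 < d₁) (hd12 : d₁ ≤ d₂)
    (H₁ H₂ : ℝ)
    (hH1 : H₁ = 2 * Real.log 2 * ((N : ℝ) + L) / ((N : ℝ) * p₁))
    (hH2 : H₂ = 2 * Real.log 2 * ((N : ℝ) + L) / ((N : ℝ) * p₂))
    (z : PortT → ServT → ℝ)
    (hz : ∀ ℓ r, z ℓ r =
      if r ∈ R1 then min 1 (lam ℓ * H₁ / ((N : ℝ) * d₁))
      else if r ∈ R2 then min 1 (lam ℓ * H₂ / ((N : ℝ) * d₂))
      else 0)
    (weight : Finset (PortT × ServT) → ℝ)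
    (hweight : ∀ G, weight G = ∏ e : PortT × ServT,
      (if e ∈ G then z e.1 e.2 else 1 - z e.1 e.2))
    (D : Finset (PortT × ServT) → Finset ServT → ℝ)
    (hD : ∀ G I, D G I =
      ∑ ℓ ∈ Finset.univ.filter (fun ℓ : PortT => ∀ r ∈ I, (ℓ, r) ∉ G), lam ℓ) :
    1 - (2 : ℝ) ^ (-((N : ℤ) + (L : ℤ) - 1)) ≤
      ∑ G ∈ Finset.univ.filter (fun G : Finset (PortT × ServT) =>
        (∀ I ⊆ R1, (N : ℝ) * p₁ ≤ (I.card : ℝ) → D G I ≤ (N : ℝ) * d₁) ∧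
        (∀ I ⊆ R2, (N : ℝ) * p₂ ≤ (I.card : ℝ) → D G I ≤ (N : ℝ) * d₂)),
        weight G := by
  subst hH1 hH2
  have hp₂ := hp1.trans_le hp12
  have hd₂ := hd1.trans_le hd12
  have hrate₂ (ℓ : PortT) := edgeRate_nonneg (N := N) (L := L) hp₂.le hd₂.le (hlam ℓ)
  have hrate (ℓ : PortT) := edgeRate_anti (L := L) hNpos hp1 hp12 hd1 hd12 (hlam ℓ)
  obtain rfl : weight = randomSubsetWeight fun e => z e.1 e.2 := funext hweight
  obtain rfl : D = disconnectedRate lam := funext₂ fun G I => (hD G I).trans <| by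
    unfold disconnectedRate
    congr!
  convert stmt_8_general L N hL hN hNpos R1 R2 lam p₁ p₂ d₁ d₂ hp1 hp₂ hd1 hd₂ _
    (fun e => Set.mem_of_eq_of_mem (hz e.1 e.2)
      (layeredProb_mem_Icc ((hrate₂ e.1).trans (hrate e.1)) (hrate₂ e.1)))
    (fun ℓ r hr => (min_one_le_layeredProb_of_mem_left hr).trans_eq (hz ℓ r).symm)
    (fun ℓ r hr => (min_one_le_layeredProb_of_mem_right (hrate ℓ) hr).trans_eq (hz ℓ r).symm)
    <;> rfl
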